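/- Fix ε = ±1 and a ∈ ℝ. Define φ_ε : ℝ⁴ → ℝ⁴ by φ_ε(x) = (x¹ + a cos(x³+x⁴), x² + ε a sin(x³+x⁴), x³, x⁴), and for each q ∈ ℝ⁴ define ξ_q : ℝ⁴ → ℝ⁴ by ξ_q(x) = (x¹ cos(q³+q⁴) − ε x² sin(q³+q⁴) + q¹, ε x¹ sin(q³+q⁴) + x² cos(q³+q⁴) + q², x³ + q³, x⁴ + q⁴). Then ξ_q ∘ φ_ε = φ_ε ∘ ξ_q for every q ∈ ℝ⁴. -/

import Mathlib

/-!
The solution displaces each point `x` by a vector `v (x³ + x⁴)` tracing a circle in the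
`x¹x²`-plane, while `ξ_q` is a rotation `R` of that plane followed by the translation by `q`. The
map `ξ_q` shifts the phase `x³ + x⁴` by `q³ + q⁴`, which up to the sign `ε` is also the angle of
`R`, so `R` carries `v (x³ + x⁴)` to the displacement at the shifted phase.
-/

theorem commute_add_of_semiconj {M A F : Type*} [AddCommSemigroup M] [FunLike F M M]
    [AddHomClass F M M] {R : F} {q : M} {τ : M → A} {v : A → M} {g : A → A}
    (hτ : Function.Semiconj τ (fun x ↦ R x + q) g) (hv : Function.Semiconj v g R) :
    Function.Commute (fun x ↦ R x + q) (fun x ↦ x + v (τ x)) := by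
  intro x
  calc R (x + v (τ x)) + q
      = R x + q + R (v (τ x)) := by rw [map_add, add_right_comm]
    _ = R x + q + v (τ (R x + q)) := by rw [hτ x, hv (τ x)]

/-- The phase `x³ + x⁴` of a point of Minkowski space; the paper's coordinates `x¹, …, x⁴` are
indexed by `0, …, 3`. -/
def phase : (Fin 4 → ℝ) →ₗ[ℝ] ℝ where
  toFun x := x 2 + x 3
  map_add' x y := add_add_add_comm (x 2) (y 2) (x 3) (y 3)
  map_smul' c x := (mul_add c (x 2) (x 3)).symm

/-- The linear part of a screw motion of handedness `ε`: for `ε = ±1`, the rotation of the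
`x¹x²`-plane by the angle `ε * α`. -/
noncomputable def screwRotation (ε α : ℝ) : Matrix (Fin 4) (Fin 4) ℝ :=
  !![Real.cos α, -(ε * Real.sin α), 0, 0;
     ε * Real.sin α, Real.cos α, 0, 0;
     0, 0, 1, 0;
     0, 0, 0, 1]

/-- The displacement of a point of phase `θ` by the massless solution of amplitude `a` and
handedness `ε`. -/
noncomputable def helicalDisplacement (ε a θ : ℝ) : Fin 4 → ℝ :=
  ![a * Real.cos θ, ε * a * Real.sin θ, 0, 0]

theorem phase_apply (x : Fin 4 → ℝ) : phase x = x 2 + x 3 := rfl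

theorem screwRotation_mulVec (ε α : ℝ) (x : Fin 4 → ℝ) :
    (screwRotation ε α).mulVec x =
      ![x 0 * Real.cos α - ε * x 1 * Real.sin α,
        ε * x 0 * Real.sin α + x 1 * Real.cos α,
        x 2,
        x 3] := by
  ext i
  fin_cases i <;> simp [screwRotation, Matrix.mulVec, dotProduct, Fin.sum_univ_four] <;> ring

theorem phase_screwRotation_mulVec (ε α : ℝ) (x : Fin 4 → ℝ) :
    phase ((screwRotation ε α).mulVec x) = phase x := by
  rw [screwRotation_mulVec]
  rfl

theorem screwRotation_mulVec_helicalDisplacement {ε : ℝ} (hε : ε * ε = 1) (a α θ : ℝ) :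
    (screwRotation ε α).mulVec (helicalDisplacement ε a θ) =
      helicalDisplacement ε a (θ + α) := by
  have cos_coord : a * Real.cos θ * Real.cos α - ε * (ε * a * Real.sin θ) * Real.sin α =
      a * Real.cos (θ + α) := by
    rw [Real.cos_add]
    linear_combination -(a * Real.sin θ * Real.sin α) * hε
  have sin_coord : ε * (a * Real.cos θ) * Real.sin α + ε * a * Real.sin θ * Real.cos α =
      ε * a * Real.sin (θ + α) := by
    rw [Real.sin_add]
    ring
  rw [screwRotation_mulVec]
  simp [helicalDisplacement, cos_coord, sin_coord]

/-- The massless solution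
`φ_ε(x) = (x¹ + a cos(x³+x⁴), x² + εa sin(x³+x⁴), x³, x⁴)` is equivariant with respect
to every isometry
`ξ_q(x) = (x¹cos(q³+q⁴) − εx²sin(q³+q⁴) + q¹, εx¹sin(q³+q⁴) + x²cos(q³+q⁴) + q², x³+q³, x⁴+q⁴)`
of the massless screw group: `ξ_q ∘ φ_ε = φ_ε ∘ ξ_q` for every `q ∈ ℝ⁴`. -/
theorem massless_solution_equivariant
    (ε : ℝ) (hε : ε = 1 ∨ ε = -1) (a : ℝ)
    (φ : (Fin 4 → ℝ) → (Fin 4 → ℝ))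
    (hφ : ∀ x : Fin 4 → ℝ, φ x =
      ![x 0 + a * Real.cos (x 2 + x 3),
        x 1 + ε * a * Real.sin (x 2 + x 3),
        x 2,
        x 3])
    (ξ : (Fin 4 → ℝ) → (Fin 4 → ℝ) → (Fin 4 → ℝ))
    (hξ : ∀ q x : Fin 4 → ℝ, ξ q x =
      ![x 0 * Real.cos (q 2 + q 3) - ε * x 1 * Real.sin (q 2 + q 3) + q 0,
        ε * x 0 * Real.sin (q 2 + q 3) + x 1 * Real.cos (q 2 + q 3) + q 1,
        x 2 + q 2,
        x 3 + q 3]) :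
    ∀ q : Fin 4 → ℝ, ξ q ∘ φ = φ ∘ ξ q := by
  intro q
  have φ_eq : φ = fun x ↦ x + helicalDisplacement ε a (phase x) := by
    ext x i
    fin_cases i <;> simp [hφ, helicalDisplacement, phase_apply]
  have ξ_eq : ξ q = fun x ↦ (screwRotation ε (phase q)).mulVecLin x + q := by
    ext x i
    fin_cases i <;> simp [hξ, screwRotation_mulVec, phase_apply]
  have phase_shift : Function.Semiconj phase
      (fun x ↦ (screwRotation ε (phase q)).mulVecLin x + q) (· + phase q) := fun x ↦ by
    rw [map_add, Matrix.mulVecLin_apply, phase_screwRotation_mulVec]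
  have displacement_rotation : Function.Semiconj (helicalDisplacement ε a) (· + phase q)
      (screwRotation ε (phase q)).mulVecLin := fun θ ↦
    (screwRotation_mulVec_helicalDisplacement (mul_self_eq_one_iff.mpr hε) a (phase q) θ).symm
  rw [φ_eq, ξ_eq]
  exact (commute_add_of_semiconj phase_shift displacement_rotation).comp_eq
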